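/- Let d ≥ 2, λ > 0, and α, β ∈ ℝ with β ≠ 0 and αβ ≥ 0, and let Ψ be the harmonic weight function. Then there exists a constant C > 0, depending only on φ, λ, d and α/β, such that for all R > 0 and all (t,x) ∈ Q_R the estimate |Δ_x(Ψ(x) φ_R(t,x))| ≤ C R^{−2} Ψ(x) (φ_R^*(t,x))^{λ/(λ+2)} holds. -/

import Mathlib

open MeasureTheory Real Set

noncomputable section

/-- The Laplacian of a function on `ℝ^d`, as the sum of second partial derivatives. -/
def lap {d : ℕ} (f : EuclideanSpace ℝ (Fin d) → ℝ) (x : EuclideanSpace ℝ (Fin d)) : ℝ :=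
  ∑ i : Fin d, iteratedFDeriv ℝ 2 f x ![EuclideanSpace.single i 1, EuclideanSpace.single i 1]

/-- The harmonic weight function `Ψ`. -/
def Psi (d : ℕ) (α β : ℝ) (x : EuclideanSpace ℝ (Fin d)) : ℝ :=
  if β = 0 then 1
  else if d = 2 then Real.log ‖x‖ + α / β
  else 1 - ‖x‖ ^ ((2 : ℝ) - d) + (α / β) * ((d : ℝ) - 2)

/-- `φ*`: the modification of the cutoff `φ` vanishing on `[0, 1/2)`. -/
def phiStar (φ : ℝ → ℝ) (ρ : ℝ) : ℝ := if ρ < 1 / 2 then 0 else φ ρ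

/-- The standing assumptions on the cutoff function `φ`: smooth, `0 ≤ φ ≤ 1`, `φ ≡ 1` on
`[0,1/2]`, decreasing on `(1/2, 1)` and `φ ≡ 0` on `[1, ∞)`. -/
def CutoffHyp (φ : ℝ → ℝ) : Prop :=
  ContDiff ℝ (⊤ : ℕ∞) φ ∧ (∀ ρ, 0 ≤ φ ρ ∧ φ ρ ≤ 1) ∧ (∀ ρ ∈ Icc (0 : ℝ) (1 / 2), φ ρ = 1) ∧
  AntitoneOn φ (Ioo (1 / 2 : ℝ) 1) ∧ ∀ ρ, (1 : ℝ) ≤ ρ → φ ρ = 0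

/-- `φ_R(t,x) = (φ((t² + (|x|-1)⁴)/R⁴))^{λ+2}`. -/
def phiR {d : ℕ} (φ : ℝ → ℝ) (lam R t : ℝ) (x : EuclideanSpace ℝ (Fin d)) : ℝ :=
  φ ((t ^ 2 + (‖x‖ - 1) ^ 4) / R ^ 4) ^ (lam + 2)

/-- `φ_R^*(t,x) = (φ*((t² + (|x|-1)⁴)/R⁴))^{λ+2}`. -/
def phiRStar {d : ℕ} (φ : ℝ → ℝ) (lam R t : ℝ) (x : EuclideanSpace ℝ (Fin d)) : ℝ :=
  phiStar φ ((t ^ 2 + (‖x‖ - 1) ^ 4) / R ^ 4) ^ (lam + 2)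

/-!
Write `Ψ(x) = P(|x|)` and `φ_R(t, x) = H(|x|)`. Since `Ψ` is harmonic, its second derivatives drop
out of the Laplacian of the product and
`Δ(Ψ φ_R) = 2 P' H' + P (H'' + (d - 1) / r · H')` at `r = |x|`.
The factor `P'` is absorbed into `P` by concavity: a nonnegative nondecreasing radial harmonic
function is concave in `r`, so its tangents give `P'(r) (r - 1) ≤ P(r)`. The lost factor `r - 1` is
paid for by `H'`, because the derivative of `(r - 1) ^ 4 / R ^ 4` is at most `4 (r - 1) / R ^ 2`
when `r - 1 ≤ R`. Finally, two derivatives of `φ ^ (λ + 2)` cost at most two powers of `φ`, and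
they vanish where `φ` is locally constant, which leaves the factor `(φ*) ^ λ`.
-/

section RadialLaplacian

open scoped Topology Laplacian RealInnerProductSpace

variable {E : Type*} [NormedAddCommGroup E] [InnerProductSpace ℝ E]
  {F F' : ℝ → ℝ} {F'' : ℝ} {x : E}

lemma hasFDerivAt_norm (hx : x ≠ 0) : HasFDerivAt (‖·‖) (‖x‖⁻¹ • innerSL ℝ x) x := by
  have hsq : ‖x‖ ^ 2 ≠ 0 := by positivity
  have h := (hasStrictFDerivAt_norm_sq x).hasFDerivAt.sqrt hsq
  simp only [Real.sqrt_sq (norm_nonneg _)] at h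
  refine h.congr_fderiv ?_
  ext v
  simp only [one_div, mul_inv_rev, smul_apply, coe_innerSL_apply, nsmul_eq_mul, Nat.cast_ofNat,
    smul_eq_mul]
  field_simp

lemma hasFDerivAt_comp_norm {f' : ℝ} (hx : x ≠ 0) (hF : HasDerivAt F f' ‖x‖) :
    HasFDerivAt (fun y : E => F ‖y‖) ((f' / ‖x‖) • innerSL ℝ x) x := by
  simpa only [smul_smul, div_eq_mul_inv] using! hF.comp_hasFDerivAt x (hasFDerivAt_norm hx)

lemma fderiv_fderiv_comp_norm_apply (hx : x ≠ 0) (hF : ∀ᶠ r in 𝓝 ‖x‖, HasDerivAt F (F' r) r)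
    (hF' : HasDerivAt F' F'' ‖x‖) (v : E) :
    fderiv ℝ (fderiv ℝ fun y : E => F ‖y‖) x v v =
      F' ‖x‖ / ‖x‖ * ‖v‖ ^ 2 + (F'' - F' ‖x‖ / ‖x‖) / ‖x‖ ^ 2 * ⟪v, x⟫ ^ 2 := by
  have hx' : ‖x‖ ≠ 0 := norm_ne_zero_iff.2 hx
  have hfderiv : (fderiv ℝ fun y : E => F ‖y‖) =ᶠ[𝓝 x]
      fun y => (F' ‖y‖ / ‖y‖) • innerSL ℝ y := by
    filter_upwards [continuous_norm.continuousAt.eventually hF, isOpen_ne.mem_nhds hx]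
      with y hy hy0
    exact (hasFDerivAt_comp_norm hy0 hy).fderiv
  have hcoeff : HasFDerivAt (fun y : E => F' ‖y‖ / ‖y‖) _ x :=
    hasFDerivAt_comp_norm hx (hF'.div (hasDerivAt_id _) hx')
  have hsecond := (hcoeff.smul (innerSL ℝ (E := E)).hasFDerivAt).congr_of_eventuallyEq hfderiv
  rw [hsecond.fderiv]
  have hself : innerSL ℝ v v = ‖v‖ ^ 2 := real_inner_self_eq_norm_sq v
  have hsymm : innerSL ℝ x v = ⟪v, x⟫ := real_inner_comm v x
  simp only [id_eq, mul_one, add_apply, smul_apply, ContinuousLinearMap.smulRight_apply, hsymm,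
    smul_eq_mul, hself, add_right_inj]
  field_simp

theorem laplacian_comp_norm [FiniteDimensional ℝ E] (hx : x ≠ 0)
    (hF : ∀ᶠ r in 𝓝 ‖x‖, HasDerivAt F (F' r) r) (hF' : HasDerivAt F' F'' ‖x‖) :
    Δ (fun y : E => F ‖y‖) x = F'' + (Module.finrank ℝ E - 1) / ‖x‖ * F' ‖x‖ := by
  have hx' : ‖x‖ ≠ 0 := norm_ne_zero_iff.2 hx
  let b := stdOrthonormalBasis ℝ E
  have hterm (i) : iteratedFDeriv ℝ 2 (fun y : E => F ‖y‖) x ![b i, b i] =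
      F' ‖x‖ / ‖x‖ + (F'' - F' ‖x‖ / ‖x‖) / ‖x‖ ^ 2 * ⟪b i, x⟫ ^ 2 := by
    rw [iteratedFDeriv_two_apply]
    simpa using fderiv_fderiv_comp_norm_apply hx hF hF' (b i)
  rw [InnerProductSpace.laplacian_eq_iteratedFDeriv_orthonormalBasis _ b]
  simp only [hterm, Finset.sum_add_distrib, ← Finset.mul_sum, b.sum_sq_inner_right,
    Finset.sum_const, Finset.card_univ, Fintype.card_fin, nsmul_eq_mul]
  field_simp
  ring

lemma lap_eq_laplacian {d : ℕ} (f : EuclideanSpace ℝ (Fin d) → ℝ) : lap f = Δ f := by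
  rw [InnerProductSpace.laplacian_eq_iteratedFDeriv_orthonormalBasis f
    (EuclideanSpace.basisFun (Fin d) ℝ)]
  simp only [EuclideanSpace.basisFun_apply]
  rfl

end RadialLaplacian

/-- `P` is the profile of a nonnegative, radially nondecreasing harmonic function `x ↦ P ‖x‖` on the
exterior of the unit ball of an `n`-dimensional Euclidean space, and `P'` is its derivative.
Harmonicity is encoded by the radial equation `P'' + (n - 1) / r * P' = 0`. -/
structure IsHarmonicProfile (n : ℕ) (P P' : ℝ → ℝ) : Prop where
  hasDerivAt : ∀ r > 1, HasDerivAt P (P' r) r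
  hasDerivAt_deriv : ∀ r > 1, HasDerivAt P' (-((n - 1) / r * P' r)) r
  nonneg : ∀ r > 1, 0 ≤ P r
  deriv_nonneg : ∀ r > 1, 0 ≤ P' r

namespace IsHarmonicProfile

section Estimates

open scoped Topology Laplacian

variable {n : ℕ} {P P' : ℝ → ℝ} {r : ℝ}

lemma concaveOn (hP : IsHarmonicProfile n P P') (hn : 1 ≤ n) : ConcaveOn ℝ (Ioi 1) P := by
  refine concaveOn_of_hasDerivWithinAt2_nonpos (convex_Ioi 1) (f' := P')
    (f'' := fun r => -((n - 1) / r * P' r)) (HasDerivAt.continuousOn hP.hasDerivAt) ?_ ?_ ?_ <;>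
    rw [interior_Ioi]
  · exact fun r hr => (hP.hasDerivAt r hr).hasDerivWithinAt
  · exact fun r hr => (hP.hasDerivAt_deriv r hr).hasDerivWithinAt
  · intro r hr
    have hn' : (0 : ℝ) ≤ n - 1 := sub_nonneg.2 (mod_cast hn)
    have hr0 : 0 ≤ r := zero_le_one.trans (le_of_lt hr)
    exact neg_nonpos.2 (mul_nonneg (div_nonneg hn' hr0) (hP.deriv_nonneg r hr))

lemma deriv_mul_sub_one_le (hP : IsHarmonicProfile n P P') (hn : 1 ≤ n) (hr : 1 < r) :
    P' r * (r - 1) ≤ P r := by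
  have htangent : ∀ s ∈ Ioo 1 r, P' r * (r - s) ≤ P r := fun s hs => by
    have hslope : P' r ≤ (P r - P s) / (r - s) := by
      simpa only [slope_def_field] using
        (hP.concaveOn hn).le_slope_of_hasDerivAt hs.1 hr hs.2 (hP.hasDerivAt r hr)
    rw [le_div_iff₀ (sub_pos.2 hs.2)] at hslope
    linarith [hP.nonneg s hs.1]
  have hlim : Filter.Tendsto (fun s => P' r * (r - s)) (𝓝[>] 1) (𝓝 (P' r * (r - 1))) :=
    ((continuous_const.mul (continuous_const.sub continuous_id)).tendsto 1).mono_left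
      nhdsWithin_le_nhds
  exact le_of_tendsto hlim (Filter.eventually_of_mem (Ioo_mem_nhdsGT hr) htangent)

variable {E : Type*} [NormedAddCommGroup E] [InnerProductSpace ℝ E] [FiniteDimensional ℝ E]
  {H : ℝ → ℝ} {x : E}

lemma laplacian_mul_comp_norm (hP : IsHarmonicProfile (Module.finrank ℝ E) P P')
    (hH : ContDiff ℝ 2 H) (hx : 1 < ‖x‖) :
    Δ (fun y : E => P ‖y‖ * H ‖y‖) x = 2 * (P' ‖x‖ * deriv H ‖x‖) +
      P ‖x‖ * (deriv (deriv H) ‖x‖ + (Module.finrank ℝ E - 1) / ‖x‖ * deriv H ‖x‖) := by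
  have hH1 (r) : HasDerivAt H (deriv H r) r := (hH.differentiable two_ne_zero r).hasDerivAt
  have hH2 (r) : HasDerivAt (deriv H) (deriv (deriv H) r) r :=
    (hH.differentiable_deriv_two r).hasDerivAt
  have hPH : ∀ᶠ r in 𝓝 ‖x‖, HasDerivAt (fun r => P r * H r) (P' r * H r + P r * deriv H r) r :=
    Filter.eventually_of_mem (Ioi_mem_nhds hx) fun r hr => (hP.hasDerivAt r hr).mul (hH1 r)
  have hPH' := ((hP.hasDerivAt_deriv _ hx).mul (hH1 _)).add ((hP.hasDerivAt _ hx).mul (hH2 _))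
  have hx0 : x ≠ 0 := norm_pos_iff.1 (zero_lt_one.trans hx)
  rw [laplacian_comp_norm hx0 hPH hPH']
  ring

theorem abs_laplacian_mul_comp_norm_le {A : ℝ}
    (hP : IsHarmonicProfile (Module.finrank ℝ E) P P') (hH : ContDiff ℝ 2 H) (hx : 1 < ‖x‖)
    (hH1 : |deriv H ‖x‖| ≤ A * (‖x‖ - 1)) (hH2 : |deriv (deriv H) ‖x‖| ≤ A) :
    |Δ (fun y : E => P ‖y‖ * H ‖y‖) x| ≤ (Module.finrank ℝ E + 2) * A * P ‖x‖ := by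
  have hn : 1 ≤ Module.finrank ℝ E :=
    have : Nontrivial E := ⟨x, 0, norm_pos_iff.1 (zero_lt_one.trans hx)⟩
    Module.finrank_pos
  have hn' : (0 : ℝ) ≤ Module.finrank ℝ E - 1 := sub_nonneg.2 (mod_cast hn)
  rw [hP.laplacian_mul_comp_norm hH hx]
  set r := ‖x‖
  set m : ℝ := Module.finrank ℝ E - 1 with hm
  have hA : 0 ≤ A := (abs_nonneg _).trans hH2
  have hPr := hP.nonneg r hx
  have hP'r := hP.deriv_nonneg r hx
  have hcross : |P' r * deriv H r| ≤ A * P r :=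
    calc |P' r * deriv H r| = P' r * |deriv H r| := by rw [abs_mul, abs_of_nonneg hP'r]
      _ ≤ P' r * (A * (r - 1)) := by gcongr
      _ = A * (P' r * (r - 1)) := by ring
      _ ≤ A * P r := by gcongr; exact hP.deriv_mul_sub_one_le hn hx
  have hdrift : |m / r * deriv H r| ≤ m * A :=
    calc |m / r * deriv H r| = m / r * |deriv H r| := by rw [abs_mul, abs_of_nonneg (by positivity)]
      _ ≤ m / r * (A * r) := by gcongr; exact hH1.trans (by gcongr; linarith)
      _ = m * A := by field_simp
  calc |2 * (P' r * deriv H r) + P r * (deriv (deriv H) r + m / r * deriv H r)|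
      ≤ 2 * |P' r * deriv H r| + P r * (|deriv (deriv H) r| + |m / r * deriv H r|) := by
        refine (abs_add_le _ _).trans ?_
        rw [abs_mul, abs_mul (P r), abs_two, abs_of_nonneg hPr]
        gcongr
        exact abs_add_le _ _
    _ ≤ 2 * (A * P r) + P r * (A + m * A) := by gcongr
    _ = (Module.finrank ℝ E + 2) * A * P r := by rw [hm]; ring

end Estimates

lemma one (n : ℕ) : IsHarmonicProfile n (fun _ => 1) (fun _ => 0) where
  hasDerivAt r _ := hasDerivAt_const r 1
  hasDerivAt_deriv r _ := by simpa using hasDerivAt_const r (0 : ℝ)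
  nonneg _ _ := zero_le_one
  deriv_nonneg _ _ := le_rfl

lemma log_add_const {c : ℝ} (hc : 0 ≤ c) :
    IsHarmonicProfile 2 (fun r => Real.log r + c) (fun r => r⁻¹) where
  hasDerivAt r hr := (Real.hasDerivAt_log (zero_lt_one.trans hr).ne').add_const c
  hasDerivAt_deriv r hr := by
    have hr0 : r ≠ 0 := (zero_lt_one.trans hr).ne'
    refine (hasDerivAt_inv hr0).congr_deriv ?_
    push_cast
    field_simp
    norm_num
  nonneg r hr := add_nonneg (Real.log_nonneg hr.le) hc
  deriv_nonneg r hr := inv_nonneg.2 (zero_le_one.trans hr.le)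

lemma one_sub_rpow_add_const {n : ℕ} (hn : 2 ≤ n) {c : ℝ} (hc : 0 ≤ c) :
    IsHarmonicProfile n (fun r => 1 - r ^ ((2 : ℝ) - n) + c)
      (fun r => ((n : ℝ) - 2) * r ^ ((1 : ℝ) - n)) where
  hasDerivAt r hr := by
    have hr0 : r ≠ 0 := (zero_lt_one.trans hr).ne'
    refine (((Real.hasDerivAt_rpow_const (Or.inl hr0)).const_sub 1).add_const c).congr_deriv ?_
    rw [show (2 : ℝ) - n - 1 = 1 - n by ring]
    ring
  hasDerivAt_deriv r hr := by
    have hr0 : r ≠ 0 := (zero_lt_one.trans hr).ne'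
    refine ((Real.hasDerivAt_rpow_const (Or.inl hr0)).const_mul _).congr_deriv ?_
    rw [Real.rpow_sub_one hr0]
    ring
  nonneg r hr := by
    have hexp : (2 : ℝ) - n ≤ 0 := sub_nonpos.2 (mod_cast hn)
    linarith [Real.rpow_le_one_of_one_le_of_nonpos hr.le hexp]
  deriv_nonneg r hr :=
    mul_nonneg (sub_nonneg.2 (mod_cast hn)) (Real.rpow_nonneg (zero_le_one.trans hr.le) _)

end IsHarmonicProfile

lemma exists_isHarmonicProfile_Psi {d : ℕ} (hd : 2 ≤ d) {α β : ℝ} (hαβ : 0 ≤ α * β) :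
    ∃ P P' : ℝ → ℝ, IsHarmonicProfile d P P' ∧ ∀ x, Psi d α β x = P ‖x‖ := by
  have hratio : 0 ≤ α / β := div_nonneg_iff.2 (mul_nonneg_iff.1 hαβ)
  rcases eq_or_ne β 0 with hβ | hβ
  · exact ⟨_, _, .one d, fun x => if_pos hβ⟩
  rcases eq_or_ne d 2 with rfl | hd2
  · exact ⟨_, _, .log_add_const hratio, fun x => (if_neg hβ).trans (if_pos rfl)⟩
  · have hconst : 0 ≤ α / β * ((d : ℝ) - 2) := mul_nonneg hratio (sub_nonneg.2 (mod_cast hd))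
    exact ⟨_, _, .one_sub_rpow_add_const hd hconst, fun x => (if_neg hβ).trans (if_neg hd2)⟩

section CutoffPower

variable {φ : ℝ → ℝ} {p : ℝ}

lemma deriv_rpow_eq_mul (hφ : Differentiable ℝ φ) (hp : 2 ≤ p) {ρ : ℝ} (hρ : 0 ≤ φ ρ) :
    deriv (fun ρ => φ ρ ^ p) ρ = p * φ ρ * deriv φ ρ * φ ρ ^ (p - 2) := by
  rw [deriv_rpow_const (hφ ρ) (Or.inr (by linarith)), show p - 1 = p - 2 + 1 by ring,
    Real.rpow_add_one' hρ (by linarith)]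
  ring

lemma deriv_deriv_rpow_eq_mul (hφ : ContDiff ℝ 2 φ) (hp : 2 ≤ p) {ρ : ℝ} (hρ : 0 ≤ φ ρ) :
    deriv (deriv fun ρ => φ ρ ^ p) ρ =
      p * ((p - 1) * deriv φ ρ ^ 2 + φ ρ * deriv (deriv φ) ρ) * φ ρ ^ (p - 2) := by
  have hdiff : Differentiable ℝ φ := hφ.differentiable two_ne_zero
  have hderiv : (deriv fun ρ => φ ρ ^ p) = fun ρ => deriv φ ρ * p * φ ρ ^ (p - 1) :=
    funext fun ρ => deriv_rpow_const (hdiff ρ) (Or.inr (by linarith))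
  have hpow := (hdiff ρ).hasDerivAt.rpow_const (p := p - 1) (Or.inr (by linarith))
  rw [hderiv, (((hφ.differentiable_deriv_two ρ).hasDerivAt.mul_const p).fun_mul hpow).deriv,
    show p - 1 - 1 = p - 2 by ring, show p - 1 = p - 2 + 1 by ring,
    Real.rpow_add_one' hρ (by linarith)]
  ring

lemma exists_abs_deriv_rpow_le {s : Set ℝ} (hs : IsCompact s) (hφ : ContDiff ℝ 2 φ)
    (hφ_nonneg : ∀ ρ ∈ s, 0 ≤ φ ρ) (hp : 2 ≤ p) :
    ∃ K > 0, ∀ ρ ∈ s, |deriv (fun ρ => φ ρ ^ p) ρ| ≤ K * φ ρ ^ (p - 2) ∧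
      |deriv (deriv fun ρ => φ ρ ^ p) ρ| ≤ K * φ ρ ^ (p - 2) := by
  have hcont : Continuous φ := hφ.continuous
  have hcont1 : Continuous (deriv φ) := hφ.continuous_deriv one_le_two
  obtain ⟨K₁, hK₁⟩ := hs.exists_bound_of_continuousOn
    (f := fun ρ => p * φ ρ * deriv φ ρ) (by fun_prop)
  obtain ⟨K₂, hK₂⟩ := hs.exists_bound_of_continuousOn
    (f := fun ρ => p * ((p - 1) * deriv φ ρ ^ 2 + φ ρ * deriv (deriv φ) ρ)) (by fun_prop)
  refine ⟨max 1 (max K₁ K₂), by positivity, fun ρ hρ => ?_⟩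
  have hpow : 0 ≤ φ ρ ^ (p - 2) := Real.rpow_nonneg (hφ_nonneg ρ hρ) _
  rw [deriv_rpow_eq_mul (hφ.differentiable two_ne_zero) hp (hφ_nonneg ρ hρ),
    deriv_deriv_rpow_eq_mul hφ hp (hφ_nonneg ρ hρ), abs_mul, abs_mul _ (φ ρ ^ (p - 2)),
    abs_of_nonneg hpow]
  exact ⟨by gcongr; exact (hK₁ ρ hρ).trans (by simp), by gcongr; exact (hK₂ ρ hρ).trans (by simp)⟩

lemma phiStar_nonneg {ρ : ℝ} (hρ : 0 ≤ φ ρ) : 0 ≤ phiStar φ ρ := by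
  unfold phiStar
  split_ifs
  exacts [le_rfl, hρ]

lemma exists_abs_deriv_rpow_le_phiStar (hφ : ContDiff ℝ 2 φ)
    (hφ_nonneg : ∀ ρ ∈ Icc (0 : ℝ) 1, 0 ≤ φ ρ) (hφ_one : ∀ ρ ∈ Icc (0 : ℝ) (1 / 2), φ ρ = 1)
    (hp : 2 ≤ p) :
    ∃ K > 0, ∀ ρ ∈ Ioo (0 : ℝ) 1, |deriv (fun ρ => φ ρ ^ p) ρ| ≤ K * phiStar φ ρ ^ (p - 2) ∧
      |deriv (deriv fun ρ => φ ρ ^ p) ρ| ≤ K * phiStar φ ρ ^ (p - 2) := by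
  obtain ⟨K, hK, hbound⟩ := exists_abs_deriv_rpow_le isCompact_Icc hφ hφ_nonneg hp
  refine ⟨K, hK, fun ρ hρ => ?_⟩
  have hρ' := Ioo_subset_Icc_self hρ
  rcases lt_or_ge ρ (1 / 2) with hlt | hge
  · have hconst : (fun ρ => φ ρ ^ p) =ᶠ[nhds ρ] fun _ => 1 := by
      filter_upwards [Ioo_mem_nhds hρ.1 hlt] with z hz
      rw [hφ_one z (Ioo_subset_Icc_self hz), Real.one_rpow]
    have hrhs : 0 ≤ K * phiStar φ ρ ^ (p - 2) :=
      mul_nonneg hK.le (Real.rpow_nonneg (phiStar_nonneg (hφ_nonneg ρ hρ')) _)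
    rw [hconst.deriv_eq, hconst.deriv.deriv_eq]
    simpa using hrhs
  · simpa only [phiStar, if_neg hge.not_gt] using hbound ρ hρ'

end CutoffPower

/-- The scaled variable `(t² + (r - 1)⁴) / R⁴` in which the cutoff `φ_R` is written, as a function
of the radius `r`. -/
def cutoffVar (t R r : ℝ) : ℝ := (t ^ 2 + (r - 1) ^ 4) / R ^ 4

section CutoffVar

variable {t R r A : ℝ} {G : ℝ → ℝ}

lemma cutoffVar_mem_Ioo (hr : 1 < r) (h : t ^ 2 + (r - 1) ^ 4 < R ^ 4) :
    cutoffVar t R r ∈ Ioo (0 : ℝ) 1 := by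
  have hpos : 0 < t ^ 2 + (r - 1) ^ 4 := by have := sub_pos.2 hr; positivity
  exact ⟨div_pos hpos (hpos.trans h), (div_lt_one (hpos.trans h)).2 h⟩

lemma contDiff_cutoffVar (t R : ℝ) : ContDiff ℝ 2 (cutoffVar t R) := by
  unfold cutoffVar
  fun_prop

lemma hasDerivAt_cutoffVar (t R r : ℝ) :
    HasDerivAt (cutoffVar t R) (4 * (r - 1) ^ 3 / R ^ 4) r := by
  refine (((((hasDerivAt_id r).sub_const 1).pow 4).const_add (t ^ 2)).div_const
    (R ^ 4)).congr_deriv ?_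
  simp

lemma deriv_comp_cutoffVar (hG : Differentiable ℝ G) (t R r : ℝ) :
    deriv (G ∘ cutoffVar t R) r = deriv G (cutoffVar t R r) * (4 * (r - 1) ^ 3 / R ^ 4) :=
  ((hG _).hasDerivAt.comp r (hasDerivAt_cutoffVar t R r)).deriv

lemma deriv_deriv_comp_cutoffVar (hG : ContDiff ℝ 2 G) (t R r : ℝ) :
    deriv (deriv (G ∘ cutoffVar t R)) r =
      deriv (deriv G) (cutoffVar t R r) * (4 * (r - 1) ^ 3 / R ^ 4) ^ 2 +
        deriv G (cutoffVar t R r) * (12 * (r - 1) ^ 2 / R ^ 4) := by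
  have hcubic : HasDerivAt (fun r => 4 * (r - 1) ^ 3 / R ^ 4) (12 * (r - 1) ^ 2 / R ^ 4) r := by
    refine (((((hasDerivAt_id r).sub_const 1).pow 3).const_mul 4).div_const (R ^ 4)).congr_deriv ?_
    simp only [Nat.cast_ofNat, id_eq, Nat.add_one_sub_one, mul_one]
    ring
  have hG' := (hG.differentiable_deriv_two _).hasDerivAt.comp r (hasDerivAt_cutoffVar t R r)
  rw [funext (deriv_comp_cutoffVar (hG.differentiable two_ne_zero) t R)]
  exact (hG'.mul hcubic).deriv.trans (by rw [Function.comp_apply]; ring)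

lemma sq_div_pow_four_le (hr : 1 ≤ r) (hrR : r - 1 ≤ R) : (r - 1) ^ 2 / R ^ 4 ≤ 1 / R ^ 2 := by
  calc (r - 1) ^ 2 / R ^ 4 ≤ R ^ 2 / R ^ 4 := by gcongr
    _ = 1 / R ^ 2 := by rcases eq_or_ne R 0 with rfl | hR <;> [simp; field_simp]

lemma abs_deriv_comp_cutoffVar_le (hG : Differentiable ℝ G) (hr : 1 ≤ r) (hrR : r - 1 ≤ R)
    (hA : |deriv G (cutoffVar t R r)| ≤ A) :
    |deriv (G ∘ cutoffVar t R) r| ≤ 4 * A / R ^ 2 * (r - 1) := by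
  have hscale := sq_div_pow_four_le hr hrR
  have hA0 : 0 ≤ A := (abs_nonneg _).trans hA
  rw [deriv_comp_cutoffVar hG, abs_mul, abs_of_nonneg (by positivity : 0 ≤ 4 * (r - 1) ^ 3 / R ^ 4)]
  calc |deriv G (cutoffVar t R r)| * (4 * (r - 1) ^ 3 / R ^ 4)
      ≤ A * (4 * (r - 1) ^ 3 / R ^ 4) := by gcongr
    _ = 4 * A * ((r - 1) ^ 2 / R ^ 4) * (r - 1) := by ring
    _ ≤ 4 * A * (1 / R ^ 2) * (r - 1) := by gcongr
    _ = 4 * A / R ^ 2 * (r - 1) := by ring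

lemma abs_deriv_deriv_comp_cutoffVar_le (hG : ContDiff ℝ 2 G) (hr : 1 ≤ r) (hrR : r - 1 ≤ R)
    (hA₁ : |deriv G (cutoffVar t R r)| ≤ A) (hA₂ : |deriv (deriv G) (cutoffVar t R r)| ≤ A) :
    |deriv (deriv (G ∘ cutoffVar t R)) r| ≤ 28 * A / R ^ 2 := by
  have hA0 : 0 ≤ A := (abs_nonneg _).trans hA₁
  have hscale := sq_div_pow_four_le hr hrR
  have hslope_sq : (4 * (r - 1) ^ 3 / R ^ 4) ^ 2 ≤ 16 / R ^ 2 :=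
    calc (4 * (r - 1) ^ 3 / R ^ 4) ^ 2 = 16 * ((r - 1) ^ 2 / R ^ 4) ^ 2 * (r - 1) ^ 2 := by ring
      _ ≤ 16 * (1 / R ^ 2) ^ 2 * R ^ 2 := by gcongr
      _ = 16 / R ^ 2 := by rcases eq_or_ne R 0 with rfl | hR <;> [simp; field_simp]
  have hcurv : 12 * (r - 1) ^ 2 / R ^ 4 ≤ 12 / R ^ 2 :=
    calc 12 * (r - 1) ^ 2 / R ^ 4 = 12 * ((r - 1) ^ 2 / R ^ 4) := by ring
      _ ≤ 12 * (1 / R ^ 2) := by gcongr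
      _ = 12 / R ^ 2 := by ring
  rw [deriv_deriv_comp_cutoffVar hG]
  refine (abs_add_le _ _).trans ?_
  rw [abs_mul, abs_mul, abs_of_nonneg (by positivity : 0 ≤ (4 * (r - 1) ^ 3 / R ^ 4) ^ 2),
    abs_of_nonneg (by positivity : 0 ≤ 12 * (r - 1) ^ 2 / R ^ 4)]
  calc _ ≤ A * (16 / R ^ 2) + A * (12 / R ^ 2) := by gcongr
    _ = 28 * A / R ^ 2 := by ring

lemma exists_abs_deriv_cutoff_le {φ : ℝ → ℝ} {p : ℝ} (hφ : ContDiff ℝ 2 φ)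
    (hφ_nonneg : ∀ ρ ∈ Icc (0 : ℝ) 1, 0 ≤ φ ρ) (hφ_one : ∀ ρ ∈ Icc (0 : ℝ) (1 / 2), φ ρ = 1)
    (hp : 2 ≤ p) :
    ∃ K > 0, ∀ R > 0, ∀ t r : ℝ, 1 < r → t ^ 2 + (r - 1) ^ 4 < R ^ 4 →
      |deriv ((fun ρ => φ ρ ^ p) ∘ cutoffVar t R) r| ≤
          K / R ^ 2 * phiStar φ (cutoffVar t R r) ^ (p - 2) * (r - 1) ∧
        |deriv (deriv ((fun ρ => φ ρ ^ p) ∘ cutoffVar t R)) r| ≤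
          K / R ^ 2 * phiStar φ (cutoffVar t R r) ^ (p - 2) := by
  obtain ⟨K, hK, hbound⟩ := exists_abs_deriv_rpow_le_phiStar hφ hφ_nonneg hφ_one hp
  refine ⟨28 * K, by positivity, fun R hR t r hr hQ => ?_⟩
  obtain ⟨hG₁, hG₂⟩ := hbound _ (cutoffVar_mem_Ioo hr hQ)
  have hG : ContDiff ℝ 2 fun ρ => φ ρ ^ p := hφ.rpow_const_of_le (m := 2) hp
  have hrR : r - 1 ≤ R := (lt_of_pow_lt_pow_left₀ 4 hR.le (by linarith [sq_nonneg t])).le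
  set f := phiStar φ (cutoffVar t R r) ^ (p - 2)
  have hKf : 0 ≤ K * f := (abs_nonneg _).trans hG₁
  constructor
  · calc |deriv ((fun ρ => φ ρ ^ p) ∘ cutoffVar t R) r| ≤ 4 * (K * f) / R ^ 2 * (r - 1) :=
          abs_deriv_comp_cutoffVar_le (hG.differentiable two_ne_zero) hr.le hrR hG₁
      _ ≤ 28 * (K * f) / R ^ 2 * (r - 1) := by gcongr; norm_num
      _ = 28 * K / R ^ 2 * f * (r - 1) := by ring
  · exact (abs_deriv_deriv_comp_cutoffVar_le hG hr.le hrR hG₁ hG₂).trans_eq (by ring)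

end CutoffVar

lemma phiRStar_rpow {d : ℕ} {φ : ℝ → ℝ} {lam t R : ℝ} {x : EuclideanSpace ℝ (Fin d)}
    (hlam : lam + 2 ≠ 0) (hφ : 0 ≤ φ (cutoffVar t R ‖x‖)) :
    phiRStar φ lam R t x ^ (lam / (lam + 2)) = phiStar φ (cutoffVar t R ‖x‖) ^ lam := by
  rw [phiRStar, ← cutoffVar, ← Real.rpow_mul (phiStar_nonneg hφ), mul_div_cancel₀ lam hlam]

theorem Psi_phiR_laplacian_est_general (d : ℕ) (hd : 2 ≤ d) (lam : ℝ) (hlam : 0 ≤ lam)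
    (φ : ℝ → ℝ) (hφ : ContDiff ℝ 2 φ) (hφ_nonneg : ∀ ρ ∈ Icc (0 : ℝ) 1, 0 ≤ φ ρ)
    (hφ_one : ∀ ρ ∈ Icc (0 : ℝ) (1 / 2), φ ρ = 1) :
    ∃ C > (0 : ℝ), ∀ α β : ℝ, 0 ≤ α * β → ∀ R > (0 : ℝ), ∀ (t : ℝ) (x : EuclideanSpace ℝ (Fin d)),
      1 < ‖x‖ → t ^ 2 + (‖x‖ - 1) ^ 4 < R ^ 4 →
      |lap (fun y => Psi d α β y * phiR φ lam R t y) x|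
        ≤ C * R ^ (-2 : ℝ) * Psi d α β x * phiRStar φ lam R t x ^ (lam / (lam + 2)) := by
  obtain ⟨K, hK, hbound⟩ := exists_abs_deriv_cutoff_le hφ hφ_nonneg hφ_one (p := lam + 2)
    (by linarith)
  refine ⟨(d + 2) * K, by positivity, fun α β hαβ R hR t x hx hQ => ?_⟩
  obtain ⟨P, P', hP, hPsi⟩ := exists_isHarmonicProfile_Psi hd hαβ
  have hφ_var : 0 ≤ φ (cutoffVar t R ‖x‖) :=
    hφ_nonneg _ (Ioo_subset_Icc_self (cutoffVar_mem_Ioo hx hQ))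
  obtain ⟨hH₁, hH₂⟩ := hbound R hR t ‖x‖ hx hQ
  have hH : ContDiff ℝ 2 ((fun ρ => φ ρ ^ (lam + 2)) ∘ cutoffVar t R) :=
    (hφ.rpow_const_of_le (m := 2) (by norm_num [hlam])).comp (contDiff_cutoffVar t R)
  rw [← finrank_euclideanSpace_fin (𝕜 := ℝ) (n := d)] at hP
  have hlap := hP.abs_laplacian_mul_comp_norm_le hH hx hH₁ hH₂
  rw [finrank_euclideanSpace_fin, add_sub_cancel_right] at hlap
  rw [lap_eq_laplacian, phiRStar_rpow (by linarith) hφ_var, Real.rpow_neg hR.le, Real.rpow_two]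
  simp only [hPsi]
  exact hlap.trans_eq (by ring)

theorem Psi_phiR_laplacian_est (d : ℕ) (hd : 2 ≤ d) (lam : ℝ) (hlam : 0 < lam)
    (α β : ℝ) (hβ : β ≠ 0) (hαβ : 0 ≤ α * β)
    (φ : ℝ → ℝ) (hφ : CutoffHyp φ) :
    ∃ C > (0 : ℝ), ∀ R > (0 : ℝ), ∀ (t : ℝ) (x : EuclideanSpace ℝ (Fin d)),
      0 < t → 1 < ‖x‖ → t ^ 2 + (‖x‖ - 1) ^ 4 < R ^ 4 →
      |lap (fun y => Psi d α β y * phiR φ lam R t y) x|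
        ≤ C * R ^ (-2 : ℝ) * Psi d α β x * phiRStar φ lam R t x ^ (lam / (lam + 2)) := by
  obtain ⟨hφ_smooth, hφ_range, hφ_one, -, -⟩ := hφ
  obtain ⟨C, hC, h⟩ := Psi_phiR_laplacian_est_general d hd lam hlam.le φ
    (contDiff_infty.1 hφ_smooth 2) (fun ρ _ => (hφ_range ρ).1) hφ_one
  exact ⟨C, hC, fun R hR t x _ => h α β hαβ R hR t x⟩
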